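/- arXiv:0812.2522 — 2 statements merged into one kernel-verified Lean document; each statement's English description precedes it below -/
import Mathlib

section
/- Let S and T be nonempty finite subsets of a group G with 1 ∉ S, suppose the subgroup ⟨S⟩ generated by S is finite of order q with |S| ≤ q − 2, and suppose κ₂(S̃) = |S| = |T|, where S̃ = S ∪ {1}. Then there exists x ∈ S such that λ_T(x) ≥ min{ (|S| + 1)/3, |S|·(q − |S| − 1)/(2q − |S| − 4) }. -/
/-!
The function `λ_T` vanishes at `1` and is subadditive, so if `k` is its maximum on `S`, then
`λ_T ≤ k` on `S` and `λ_T ≤ 2k` on `S̃ S̃`, where `S̃ = S ∪ {1}`. On the other hand, since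
`∑ x ≠ 1, |Tx ∩ T| ≤ |T|(|T| - 1)`, every finite set `A` not containing `1` satisfies
`∑ x ∈ A, λ_T(x) ≥ |T|(|A| - |T| + 1)`. Comparing both estimates on a set `A` with
`S ⊆ A ⊆ S̃ S̃ \ {1}` bounds `k` from below, the better the larger `A` is
(`lower_bound_of_card_le`). The connectivity hypothesis, applied to `X = S̃`, says that
`|S̃ S̃| ≥ 2|S| + 1` unless `|S̃ S̃| ≥ q - 1`; taking `|A| = 2|S|` in the first case and
`|A| = q - 2` in the second gives the two terms of the minimum.
-/

open scoped Pointwise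

open Classical in
/-- The `k`-th connectivity `κ_k(S)`: the minimum of `|(XS) \ X|` over finite subsets
`X ⊆ ⟨S⟩` with `|X| ≥ k` and `|XS| ≤ |⟨S⟩| − k` (the latter condition being vacuous
when `⟨S⟩` is infinite), with the convention `min ∅ = |⟨S⟩| − k + 1`. -/
noncomputable def kappa {G : Type*} [Group G] [DecidableEq G] (k : ℕ) (S : Finset G) : ℕ :=
  let H : Subgroup G := Subgroup.closure (S : Set G)
  let F : Set ℕ := {n | ∃ X : Finset G, k ≤ X.card ∧ (X : Set G) ⊆ (H : Set G) ∧
      ((H : Set G).Finite → (X * S).card + k ≤ Nat.card H) ∧ n = ((X * S) \ X).card}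
  if F.Nonempty then sInf F else Nat.card H - k + 1

/-- The Erdős–Heilbronn function: `λ_B(x) = |(Bx) \ B|`. -/
def lambdaEH {G : Type*} [Group G] [DecidableEq G] (B : Finset G) (x : G) : ℕ :=
  ((B.image fun b => b * x) \ B).card

section EH

variable {G : Type*} [Group G] [DecidableEq G]

theorem lambdaEH_eq (T : Finset G) (x : G) :
    lambdaEH T x = (T.filter fun a => a * x ∉ T).card := by
  unfold lambdaEH
  rw [← Finset.card_image_of_injective (T.filter fun a => a * x ∉ T) (mul_left_injective x)]
  congr 1
  ext y
  simp only [Finset.mem_sdiff, Finset.mem_image, Finset.mem_filter]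
  constructor
  · rintro ⟨⟨a, ha, rfl⟩, h⟩
    exact ⟨a, ⟨ha, h⟩, rfl⟩
  · rintro ⟨a, ⟨ha, h⟩, rfl⟩
    exact ⟨⟨a, ha, rfl⟩, h⟩

theorem lambdaEH_one (T : Finset G) : lambdaEH T 1 = 0 := by
  simp [lambdaEH]

theorem lambdaEH_mul_le (T : Finset G) (x y : G) :
    lambdaEH T (x * y) ≤ lambdaEH T x + lambdaEH T y := by
  -- `T(xy) \ T ⊆ (Tx \ T)y ∪ (Ty \ T)`
  have h : (T.image fun b => b * (x * y)) \ T ⊆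
      (((T.image fun b => b * x) \ T).image fun b => b * y) ∪
        ((T.image fun b => b * y) \ T) := by
    intro z hz
    simp only [Finset.mem_sdiff, Finset.mem_image, Finset.mem_union] at hz ⊢
    obtain ⟨⟨a, ha, rfl⟩, hz⟩ := hz
    by_cases hx : a * x ∈ T
    · exact Or.inr ⟨⟨a * x, hx, mul_assoc _ _ _⟩, hz⟩
    · exact Or.inl ⟨a * x, ⟨⟨a, ha, rfl⟩, hx⟩, mul_assoc _ _ _⟩
  exact (Finset.card_le_card h).trans <| (Finset.card_union_le _ _).trans <|
    Nat.add_le_add_right Finset.card_image_le _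

/-- Double counting: for `a ∈ T`, the elements `x ∈ A` with `a * x ∈ T` inject into
`T \ {a}`, because `1 ∉ A`. The inequality is `∑ x ∈ A, λ_T(x) ≥ |T|(|A| - |T| + 1)`,
rearranged to avoid subtraction. -/
theorem card_mul_le_sum_lambdaEH (T A : Finset G) (hA : (1 : G) ∉ A) :
    T.card * (A.card + 1) ≤ ∑ x ∈ A, lambdaEH T x + T.card * T.card := by
  have hsum : ∑ x ∈ A, (T.filter fun a => a * x ∈ T).card + T.card ≤ T.card * T.card := by
    have hswap : ∑ x ∈ A, (T.filter fun a => a * x ∈ T).card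
        = ∑ a ∈ T, (A.filter fun x => a * x ∈ T).card := by
      simp only [Finset.card_filter]
      exact Finset.sum_comm
    have hle : ∀ a ∈ T, (A.filter fun x => a * x ∈ T).card + 1 ≤ T.card := by
      intro a ha
      rw [← Finset.card_erase_add_one ha, Nat.add_le_add_iff_right]
      refine Finset.card_le_card_of_injOn (fun x => a * x) ?_ (mul_right_injective a).injOn
      intro x hx
      simp only [Finset.coe_filter, Set.mem_ofPred_eq] at hx
      simp only [Finset.coe_erase, Set.mem_sdiff, Finset.mem_coe, Set.mem_singleton_iff]
      refine ⟨hx.2, fun h => hA ?_⟩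
      rw [mul_eq_left] at h
      exact h ▸ hx.1
    have := Finset.sum_le_sum hle
    rw [Finset.sum_add_distrib] at this
    simpa [hswap] using this
  have hsplit : ∑ x ∈ A, (T.filter fun a => a * x ∈ T).card + ∑ x ∈ A, lambdaEH T x
      = A.card * T.card := by
    rw [← Finset.sum_add_distrib, Finset.sum_const_nat]
    intro x _
    rw [lambdaEH_eq]
    exact Finset.card_filter_add_card_filter_not _
  nlinarith

theorem lambdaEH_le_of_mem_insert (S T : Finset G) (k : ℕ) (hk : ∀ x ∈ S, lambdaEH T x ≤ k)
    {x : G} (hx : x ∈ insert 1 S) : lambdaEH T x ≤ k := by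
  rcases Finset.mem_insert.1 hx with rfl | hx
  · simp [lambdaEH_one]
  · exact hk x hx

/-- The two estimates of `∑ x ∈ A, λ_T(x)` compared on a set `A` of cardinality `|S| + m` with
`S ⊆ A ⊆ S̃ S̃ \ {1}`; the `m` elements of `A` outside `S` contribute at most `2k` each. -/
theorem lower_bound_of_card_le (S T : Finset G) (h1 : (1 : G) ∉ S) (k m : ℕ)
    (hk : ∀ x ∈ S, lambdaEH T x ≤ k)
    (hm : S.card + m + 1 ≤ (insert 1 S * insert 1 S).card) :
    T.card * (S.card + m + 1) ≤ S.card * k + m * (2 * k) + T.card * T.card := by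
  have h11 : (1 : G) ∈ insert 1 S * insert 1 S :=
    Finset.mem_mul.2 ⟨1, by simp, 1, by simp, by simp⟩
  have hsub : S ⊆ (insert 1 S * insert 1 S).erase 1 := by
    intro x hx
    refine Finset.mem_erase.2 ⟨fun h => h1 (h ▸ hx), Finset.mem_mul.2 ⟨1, by simp, x, ?_⟩⟩
    simp [hx]
  have hc := Finset.card_erase_add_one h11
  obtain ⟨A, hSA, hA, hAc⟩ := Finset.exists_subsuperset_card_eq (n := S.card + m) hsub
    (by omega) (by omega)
  have hA1 : (1 : G) ∉ A := fun h => by simpa using hA h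
  have hlow := card_mul_le_sum_lambdaEH T A hA1
  have hup1 : ∑ x ∈ S, lambdaEH T x ≤ S.card * k := by
    simpa using Finset.sum_le_card_nsmul S _ k hk
  have hup2 : ∑ x ∈ A \ S, lambdaEH T x ≤ m * (2 * k) := by
    have hm' : (A \ S).card = m := by
      rw [Finset.card_sdiff_of_subset hSA]; omega
    rw [← hm', ← smul_eq_mul]
    refine Finset.sum_le_card_nsmul _ _ _ fun x hx => ?_
    have hx' := Finset.mem_of_mem_erase (hA (Finset.mem_sdiff.1 hx).1)
    obtain ⟨a, ha, b, hb, rfl⟩ := Finset.mem_mul.1 hx'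
    have := lambdaEH_mul_le T a b
    have := lambdaEH_le_of_mem_insert S T k hk ha
    have := lambdaEH_le_of_mem_insert S T k hk hb
    omega
  rw [← Finset.sum_sdiff hSA, hAc] at hlow
  linarith

/-- The set `X = S̃` is admissible in the definition of `κ₂(S̃)` as soon as
`|S̃ S̃| ≤ q - 2`. -/
theorem two_mul_card_le_of_kappa (S : Finset G) (hS : S.Nonempty) (h1 : (1 : G) ∉ S)
    (hκ : kappa 2 (insert 1 S) = S.card)
    (h : (insert 1 S * insert 1 S).card + 2 ≤ Nat.card (Subgroup.closure (S : Set G))) :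
    2 * S.card + 1 ≤ (insert 1 S * insert 1 S).card := by
  have hcl : Subgroup.closure ((insert 1 S : Finset G) : Set G)
      = Subgroup.closure (S : Set G) := by
    rw [Finset.coe_insert, Subgroup.closure_insert_one]
  have hcard : (insert 1 S).card = S.card + 1 := Finset.card_insert_of_notMem h1
  have hpos := hS.card_pos
  have hle : kappa 2 (insert 1 S) ≤ ((insert 1 S * insert 1 S) \ insert 1 S).card := by
    unfold kappa
    dsimp only
    have hmem : ((insert 1 S * insert 1 S) \ insert 1 S).card ∈ {n : ℕ | ∃ X : Finset G,
        2 ≤ X.card ∧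
        (X : Set G) ⊆ (Subgroup.closure ((insert 1 S : Finset G) : Set G) : Set G) ∧
        ((Subgroup.closure ((insert 1 S : Finset G) : Set G) : Set G).Finite →
          (X * insert 1 S).card + 2 ≤
            Nat.card (Subgroup.closure ((insert 1 S : Finset G) : Set G))) ∧
        n = ((X * insert 1 S) \ X).card} :=
      ⟨insert 1 S, by omega, Subgroup.subset_closure, fun _ => by rw [hcl]; exact h, rfl⟩
    rw [if_pos ⟨_, hmem⟩]
    exact Nat.sInf_le hmem
  have hsub : insert 1 S ⊆ insert 1 S * insert 1 S := fun x hx =>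
    Finset.mem_mul.2 ⟨x, hx, 1, by simp, by simp⟩
  have := Finset.card_sdiff_add_card_eq_card hsub
  omega

end EH

theorem stmt8 {G : Type*} [Group G] [DecidableEq G] (S T : Finset G)
    (hS : S.Nonempty) (hT : T.Nonempty) (h1 : (1 : G) ∉ S)
    (hfin : ((Subgroup.closure (S : Set G) : Subgroup G) : Set G).Finite)
    (hq : S.card + 2 ≤ Nat.card (Subgroup.closure (S : Set G)))
    (hκ : kappa 2 (insert 1 S) = S.card) (hST : S.card = T.card) :
    ∃ x ∈ S, (lambdaEH T x : ℝ) ≥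
      min (((S.card : ℝ) + 1) / 3)
          ((S.card : ℝ) * ((Nat.card (Subgroup.closure (S : Set G)) : ℝ) - (S.card : ℝ) - 1) /
            (2 * (Nat.card (Subgroup.closure (S : Set G)) : ℝ) - (S.card : ℝ) - 4)) := by
  obtain ⟨x, hxS, hx⟩ := S.exists_max_image (lambdaEH T) hS
  refine ⟨x, hxS, ?_⟩
  have hpos : (0 : ℝ) < S.card := by exact_mod_cast hS.card_pos
  have key := lower_bound_of_card_le S T h1 (lambdaEH T x)
  rw [← hST] at key
  rw [ge_iff_le, min_le_iff]
  have hκS := two_mul_card_le_of_kappa S hS h1 hκ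
  generalize Nat.card (Subgroup.closure (S : Set G)) = q at hq hκS ⊢
  by_cases h : (insert 1 S * insert 1 S).card + 2 ≤ q
  · left
    have := key S.card hx (by have := hκS h; omega)
    have hR : (S.card : ℝ) * (S.card + S.card + 1) ≤
        S.card * lambdaEH T x + S.card * (2 * lambdaEH T x) + S.card * S.card := by
      exact_mod_cast this
    have : (S.card : ℝ) * (S.card + 1) ≤ S.card * (3 * lambdaEH T x) := by linarith
    have := le_of_mul_le_mul_left this hpos
    linarith
  · right
    obtain ⟨m, rfl⟩ := Nat.exists_eq_add_of_le hq
    have := key m hx (by omega)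
    have hR : (S.card : ℝ) * (S.card + m + 1) ≤
        S.card * lambdaEH T x + m * (2 * lambdaEH T x) + S.card * S.card := by
      exact_mod_cast this
    push_cast
    have hm : (0 : ℝ) ≤ m := m.cast_nonneg
    rw [div_le_iff₀ (by linarith)]
    linarith
end

section
/- Let B and A be nonempty finite subsets of a prime group G (a group with no finite subgroup other than {1} and possibly G itself, i.e. a torsion-free group or a group of prime order) with 1 ∉ B and |A| = |B|. Then μ(B, A) ≠ 0. -/
/-!
By Hall's marriage theorem it suffices to show that every `S ⊆ B` has at least `|S|` neighbours in
`A`, where `x ∈ B` is joined to `a ∈ A` when `x * a ∉ A`. Let `T ⊆ A` be the set of non-neighbours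
of `S`. Then `(S ∪ {1}) * T ⊆ A`, so if `T` is nonempty the Cauchy-Davenport inequality for
arbitrary groups gives `(|S| + 1) + |T| - 1 ≤ |A|`, i.e. the number `|A| - |T|` of neighbours is at
least `|S|`. Its other alternative, that `|A|` is at least the size of the smallest nontrivial
finite subgroup, is excluded: in a prime group that subgroup can only be `G`, whereas
`|A| = |B| < |G|` because `1 ∉ B`.
-/

/-- The number of Wakeford pairings from `B` onto `A`: bijections `φ : B → A`
with `x * φ x ∉ A` for every `x ∈ B`. -/
noncomputable def wakefordMu {G : Type*} [Group G] (B A : Finset G) : ℕ :=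
  Nat.card {φ : ↥B ≃ ↥A // ∀ x : ↥B, (x : G) * ((φ x : G)) ∉ A}

/-- In a prime group, a finite set avoiding `1` is smaller than every nontrivial finite subgroup,
because such a subgroup is the whole group. -/
lemma card_lt_minOrder {G : Type*} [Group G]
    (hprime : ∀ H : Subgroup G, (H : Set G).Finite → 2 ≤ Nat.card H → H = ⊤)
    (B : Finset G) (h1 : (1 : G) ∉ B) :
    ((B.card + 1 : ℕ) : ℕ∞) ≤ Monoid.minOrder G := by
  classical
  rw [Monoid.le_minOrder_iff_forall_subgroup]
  intro s hs hfin
  have : Finite s := hfin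
  have htop : s = ⊤ := hprime s hfin ((Subgroup.one_lt_card_iff_ne_bot s).2 hs)
  subst htop
  have : Finite G := Set.finite_univ_iff.1 (by simpa using hfin)
  have := Fintype.ofFinite G
  rw [Nat.cast_le, Subgroup.card_top, Nat.card_eq_fintype_card,
    ← Finset.card_insert_of_notMem h1]
  exact Finset.card_le_univ _

open scoped Pointwise in
/-- Hall's condition for the bipartite graph joining `x ∈ B` to those `a ∈ A` with
`x * a ∉ A`. -/
lemma card_le_card_neighbours {G : Type*} [Group G] [DecidableEq G]
    (hprime : ∀ H : Subgroup G, (H : Set G).Finite → 2 ≤ Nat.card H → H = ⊤)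
    (B A : Finset G) (h1 : (1 : G) ∉ B) (hcard : A.card = B.card)
    (S : Finset G) (hS : S ⊆ B) :
    S.card ≤ (A.filter fun a => ∃ x ∈ S, x * a ∉ A).card := by
  classical
  set T := A.filter fun a => ¬ ∃ x ∈ S, x * a ∉ A with hT
  have hsplit := A.card_filter_add_card_filter_not (fun a => ∃ x ∈ S, x * a ∉ A)
  rw [← hT] at hsplit
  rcases T.eq_empty_or_nonempty with h0 | hne
  · rw [h0, Finset.card_empty] at hsplit
    have := Finset.card_le_card hS
    omega
  · have hsub : (insert 1 S * T : Finset G) ⊆ A := by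
      intro y hy
      obtain ⟨x, hx, a, ha, rfl⟩ := Finset.mem_mul.1 hy
      rw [hT, Finset.mem_filter] at ha
      push Not at ha
      rcases Finset.mem_insert.1 hx with rfl | hx
      · simpa using ha.1
      · exact ha.2 x hx
    have hcd := cauchy_davenport_minOrder_mul (Finset.insert_nonempty 1 S) hne
    rw [Finset.card_insert_of_notMem fun h => h1 (hS h)] at hcd
    have hle := Finset.card_le_card hsub
    rcases min_le_iff.1 hcd with h | h
    · have := Nat.cast_le.1 ((card_lt_minOrder hprime B h1).trans h)
      omega
    · have := Nat.cast_le.1 h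
      omega

theorem stmt17 {G : Type*} [Group G]
    (hprime : ∀ H : Subgroup G, (H : Set G).Finite → 2 ≤ Nat.card H → H = ⊤)
    (B A : Finset G) (hBne : B.Nonempty) (hAne : A.Nonempty)
    (h1 : (1 : G) ∉ B) (hcard : A.card = B.card) :
    wakefordMu B A ≠ 0 := by
  classical
  obtain ⟨f, hinj, hf⟩ := (Finset.all_card_le_biUnion_card_iff_exists_injective
    (fun x : B => A.filter fun a => (x : G) * a ∉ A)).1 (by
      intro s
      have h := card_le_card_neighbours hprime B A h1 hcard
        (s.map (Function.Embedding.subtype _)) (by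
          intro y hy
          obtain ⟨x, -, rfl⟩ := Finset.mem_map.1 hy
          exact x.2)
      rw [Finset.card_map] at h
      refine h.trans (Finset.card_le_card ?_)
      intro a ha
      simp only [Finset.mem_filter, Finset.mem_map, Finset.mem_biUnion] at ha ⊢
      obtain ⟨haA, _, ⟨x, hx, rfl⟩, hxa⟩ := ha
      exact ⟨x, hx, haA, hxa⟩)
  let g : B → A := fun x => ⟨f x, (Finset.mem_filter.1 (hf x)).1⟩
  have hg : Function.Bijective g := by
    rw [Fintype.bijective_iff_injective_and_card]
    exact ⟨fun x y h => hinj (congrArg Subtype.val h), by simp [hcard]⟩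
  exact Nat.card_ne_zero.2 ⟨⟨⟨Equiv.ofBijective g hg, fun x => (Finset.mem_filter.1 (hf x)).2⟩⟩,
    inferInstance⟩
end
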